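/- arXiv:2406.07464 — 2 statements merged into one kernel-verified Lean document; each statement's English description precedes it below -/
import Mathlib

section
/- Let Z be a standard Gaussian vector on ℝ^q, h > 0, κ ∈ ℝ, ζ ∈ ℝ^d, and let σ : ℝ^d → M_{d,q}(ℝ) be Lipschitz continuous and ⪯-convex. Then for every convex function f : ℝ^d → ℝ with at most linear growth, the function x ↦ E f(x + hκ(x − ζ) + √h · σ(x) Z) is convex on ℝ^d. -/
open MeasureTheory ProbabilityTheory Matrix

/-- A matrix-valued map `σ : ℝ^d → M_{d,q}(ℝ)` is `⪯`-convex if for every `x, y` and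
`l ∈ [0,1]` there are orthogonal matrices `O₁, O₂` with
`σ(l x + (1−l) y) ⪯ l σ(x) O₁ + (1−l) σ(y) O₂` for the preorder
`A ⪯ B ↔ B Bᵀ − A Aᵀ` positive semi-definite. -/
def SqConvexMap {d q : ℕ} (σ : (Fin d → ℝ) → Matrix (Fin d) (Fin q) ℝ) : Prop :=
  ∀ x y : Fin d → ℝ, ∀ l ∈ Set.Icc (0 : ℝ) 1,
    ∃ O₁ O₂ : Matrix (Fin q) (Fin q) ℝ, O₁ * O₁ᵀ = 1 ∧ O₂ * O₂ᵀ = 1 ∧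
      Matrix.PosSemidef
        ((l • (σ x * O₁) + (1 - l) • (σ y * O₂)) *
            (l • (σ x * O₁) + (1 - l) • (σ y * O₂))ᵀ -
          σ (l • x + (1 - l) • y) * (σ (l • x + (1 - l) • y))ᵀ)

/-!
The law `𝓝(c, A Aᵀ)` of `c + A Z` depends on `A` only through `A Aᵀ`, and if `A ⪯ B`, then
`B Bᵀ = A Aᵀ + S Sᵀ` for some `S`, so `𝓝(c, B Bᵀ)` is the convolution of `𝓝(c, A Aᵀ)` with the
centred law `𝓝(0, S Sᵀ)`. By Jensen's inequality, adding independent centred noise can only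
increase the expectation of a convex function. The orthogonal factors do not change `A Aᵀ`, so
`⪯`-convexity reduces the claim to the joint convexity of `(c, A) ↦ E f(c + A Z)`, which holds
because `c + A Z` is linear in `(c, A)`.
-/

section ConvexOrder

variable {E : Type*} [NormedAddCommGroup E] [MeasurableSpace E]

lemma integrable_of_norm_le_linear {F : Type*} [NormedAddCommGroup F] {μ : Measure E}
    [IsFiniteMeasure μ] (hμ : Integrable id μ) {f : E → F} (hf : AEStronglyMeasurable f μ) {C : ℝ}
    (hgrowth : ∀ x, ‖f x‖ ≤ C * (1 + ‖x‖)) : Integrable f μ :=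
  (((integrable_const 1).add hμ.norm).const_mul C).mono' hf (.of_forall hgrowth)

lemma integral_le_integral_conv_of_convexOn [NormedSpace ℝ E] [CompleteSpace E]
    [BorelSpace E] [SecondCountableTopology E]
    {μ ν : Measure E} [SFinite μ] [IsProbabilityMeasure ν] (hν : Integrable id ν)
    (hν_mean : ∫ y, y ∂ν = 0) {f : E → ℝ} (hf : ConvexOn ℝ Set.univ f) (hf_cont : Continuous f)
    (hfμ : Integrable f μ) (hfμν : Integrable f (μ ∗ ν)) :
    ∫ x, f x ∂μ ≤ ∫ x, f x ∂(μ ∗ ν) := by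
  have hprod : Integrable (fun p : E × E => f (p.1 + p.2)) (μ.prod ν) :=
    Integrable.comp_measurable hfμν measurable_add
  rw [integral_conv hfμν]
  refine integral_mono_ae hfμ hprod.integral_prod_left (hprod.prod_right_ae.mono fun x hx => ?_)
  have hmean : ∫ y, x + y ∂ν = x := by
    rw [integral_add (integrable_const x) (show Integrable (fun y => y) ν from hν), integral_const,
      hν_mean, probReal_univ, one_smul, add_zero]
  calc f x = f (∫ y, x + y ∂ν) := by rw [hmean]
    _ ≤ ∫ y, f (x + y) ∂ν :=
      hf.map_integral_le hf_cont.continuousOn isClosed_univ (by simp)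
        ((integrable_const x).add hν) hx

end ConvexOrder

section AffineGaussian

variable {m ι κ : Type*} [Fintype ι] [Fintype κ]

lemma charFunDual_pi_gaussianReal (L : StrongDual ℝ (ι → ℝ)) [DecidableEq ι] :
    charFunDual (Measure.pi fun _ : ι => gaussianReal 0 1) L =
      Complex.exp (-((∑ i, L (Pi.single i 1) ^ 2 : ℝ) : ℂ) / 2) := by
  have hcoord (i : ι) : charFunDual (gaussianReal 0 1) (L.comp (.single ℝ (fun _ => ℝ) i)) =
      Complex.exp (-((L (Pi.single i 1) ^ 2 : ℝ) : ℂ) / 2) := by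
    rw [IsGaussian.charFunDual_eq, integral_complex_ofReal,
      integral_continuousLinearMap_gaussianReal, variance_continuousLinearMap_gaussianReal]
    simp [neg_div, sq_nonneg]
  rw [charFunDual_pi, Finset.prod_congr rfl fun i _ => hcoord i, ← Complex.exp_sum,
    ← Finset.sum_div, Finset.sum_neg_distrib, Complex.ofReal_sum]

/-- The Gaussian law `𝓝(c, A Aᵀ)` on `ℝ^m`, realised as the law of `c + A Z` for a standard
Gaussian vector `Z`, so that degenerate and rectangular factors `A` are allowed. -/
noncomputable def affineGaussian (c : m → ℝ) (A : Matrix m ι ℝ) : Measure (m → ℝ) :=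
  (Measure.pi fun _ : ι => gaussianReal 0 1).map fun z => c + A *ᵥ z

lemma measurable_const_add_mulVec (c : m → ℝ) (A : Matrix m ι ℝ) :
    Measurable fun z => c + A *ᵥ z :=
  measurable_pi_lambda _ fun i => by
    simp only [Pi.add_apply, mulVec, dotProduct]
    fun_prop

instance isProbabilityMeasure_affineGaussian (c : m → ℝ) (A : Matrix m ι ℝ) :
    IsProbabilityMeasure (affineGaussian c A) :=
  Measure.isProbabilityMeasure_map (measurable_const_add_mulVec c A).aemeasurable

lemma hasLaw_affineGaussian {Ω : Type*} [MeasurableSpace Ω] {P : Measure Ω} {Z : Ω → ι → ℝ}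
    (hZ : HasLaw Z (Measure.pi fun _ => gaussianReal 0 1) P) (c : m → ℝ) (A : Matrix m ι ℝ) :
    HasLaw (fun ω => c + A *ᵥ Z ω) (affineGaussian c A) P :=
  HasLaw.fun_comp (Y := fun z => c + A *ᵥ z)
    ⟨(measurable_const_add_mulVec c A).aemeasurable, rfl⟩ hZ

lemma integrable_id_pi_gaussianReal :
    Integrable (fun z => z) (Measure.pi fun _ : ι => gaussianReal 0 1) :=
  .of_eval fun _ => integrable_eval IsGaussian.integrable_id

lemma integral_id_pi_gaussianReal :
    ∫ z, z ∂(Measure.pi fun _ : ι => gaussianReal 0 1) = 0 := by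
  ext i
  rw [eval_integral fun i => integrable_eval IsGaussian.integrable_id, integral_eval,
    integral_id_gaussianReal, Pi.zero_apply]

lemma integrable_id_affineGaussian [Fintype m] (c : m → ℝ) (A : Matrix m ι ℝ) :
    Integrable id (affineGaussian c A) :=
  (integrable_map_measure (by fun_prop) (measurable_const_add_mulVec c A).aemeasurable).mpr <|
    (integrable_const c).add
      (A.mulVecLin.toContinuousLinearMap.integrable_comp integrable_id_pi_gaussianReal)

lemma integral_id_affineGaussian [Fintype m] (c : m → ℝ) (A : Matrix m ι ℝ) :
    ∫ x, x ∂(affineGaussian c A) = c := by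
  set T := A.mulVecLin.toContinuousLinearMap
  calc ∫ x, x ∂(affineGaussian c A)
      = ∫ z, c + T z ∂(Measure.pi fun _ : ι => gaussianReal 0 1) :=
        integral_map (measurable_const_add_mulVec c A).aemeasurable (by fun_prop)
    _ = c + T (∫ z, z ∂(Measure.pi fun _ : ι => gaussianReal 0 1)) := by
        rw [integral_add (integrable_const c) (T.integrable_comp integrable_id_pi_gaussianReal),
          integral_const, probReal_univ, one_smul,
          T.integral_comp_comm integrable_id_pi_gaussianReal]
    _ = c := by rw [integral_id_pi_gaussianReal, map_zero, add_zero]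

lemma sum_sq_apply_mulVec_single [Fintype m] [DecidableEq m] [DecidableEq ι]
    (L : (m → ℝ) →ₗ[ℝ] ℝ) (A : Matrix m ι ℝ) :
    ∑ i, L (A *ᵥ Pi.single i 1) ^ 2 =
      (fun j => L (Pi.single j 1)) ⬝ᵥ (A * Aᵀ) *ᵥ fun j => L (Pi.single j 1) := by
  have hL (x : m → ℝ) : L x = (fun j => L (Pi.single j 1)) ⬝ᵥ x := by
    conv_lhs => rw [pi_eq_sum_univ' x, map_sum]
    simp [dotProduct, mul_comm]
  set w : m → ℝ := fun j => L (Pi.single j 1)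
  calc ∑ i, L (A *ᵥ Pi.single i 1) ^ 2 = (w ᵥ* A) ⬝ᵥ (w ᵥ* A) :=
        Finset.sum_congr rfl fun i _ => by
          rw [hL, dotProduct_mulVec, dotProduct_single_one, sq]
    _ = w ⬝ᵥ (A * Aᵀ) *ᵥ w := by
        rw [← mulVec_mulVec, dotProduct_mulVec, mulVec_transpose]

lemma charFunDual_affineGaussian [Fintype m] [DecidableEq m] (c : m → ℝ) (A : Matrix m ι ℝ)
    (L : StrongDual ℝ (m → ℝ)) :
    charFunDual (affineGaussian c A) L = Complex.exp (L c * Complex.I -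
      (((fun j => L (Pi.single j 1)) ⬝ᵥ (A * Aᵀ) *ᵥ fun j => L (Pi.single j 1) : ℝ) : ℂ) / 2) := by
  classical
  have hmap : affineGaussian c A =
      ((Measure.pi fun _ => gaussianReal 0 1).map A.mulVecLin.toContinuousLinearMap).map (c + ·) :=
    (Measure.map_map (by fun_prop) (by fun_prop)).symm
  rw [hmap, charFunDual_map_const_add, charFunDual_map,
    charFunDual_pi_gaussianReal, ← Complex.exp_add,
    ← L.coe_coe, ← sum_sq_apply_mulVec_single (L : (m → ℝ) →ₗ[ℝ] ℝ)]
  congr 1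
  rw [neg_div, neg_add_eq_sub]
  rfl

lemma affineGaussian_congr [Finite m] (c : m → ℝ) {A : Matrix m ι ℝ} {B : Matrix m κ ℝ}
    (hAB : A * Aᵀ = B * Bᵀ) : affineGaussian c A = affineGaussian c B := by
  classical
  cases nonempty_fintype m
  refine Measure.ext_of_charFunDual (funext fun L => ?_)
  rw [charFunDual_affineGaussian, charFunDual_affineGaussian, hAB]

lemma affineGaussian_conv {l : Type*} [Fintype l] [Finite m] (c c' : m → ℝ) {A : Matrix m ι ℝ}
    {S : Matrix m κ ℝ} {B : Matrix m l ℝ} (h : A * Aᵀ + S * Sᵀ = B * Bᵀ) :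
    affineGaussian c A ∗ affineGaussian c' S = affineGaussian (c + c') B := by
  classical
  cases nonempty_fintype m
  refine Measure.ext_of_charFunDual (funext fun L => ?_)
  simp only [charFunDual_conv, charFunDual_affineGaussian, ← Complex.exp_add, ← h, add_mulVec,
    dotProduct_add, map_add, Complex.ofReal_add]
  ring_nf

end AffineGaussian

section SqConvexity

variable {E m ι κ : Type*} [AddCommGroup E] [Module ℝ E] [Fintype ι] [Fintype κ]

/-- The matrix preorder `A ⪯ B`: the covariance `B Bᵀ` dominates `A Aᵀ` in the Loewner order. -/
def SqLE (A : Matrix m ι ℝ) (B : Matrix m κ ℝ) : Prop :=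
  (B * Bᵀ - A * Aᵀ).PosSemidef

lemma SqLE.smul {A : Matrix m ι ℝ} {B : Matrix m κ ℝ} (h : SqLE A B) (r : ℝ) :
    SqLE (r • A) (r • B) := by
  simpa only [SqLE, transpose_smul, smul_mul, Matrix.mul_smul, smul_smul, smul_sub] using
    PosSemidef.smul h (mul_self_nonneg r)

open scoped MatrixOrder in
lemma SqLE.exists_add_mul_transpose_eq [Fintype m] {A : Matrix m ι ℝ} {B : Matrix m κ ℝ}
    (h : SqLE A B) :
    ∃ S : Matrix m m ℝ, A * Aᵀ + S * Sᵀ = B * Bᵀ := by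
  classical
  obtain ⟨S, hS⟩ := CStarAlgebra.nonneg_iff_eq_star_mul_self.mp (PosSemidef.nonneg h)
  rw [star_eq_conjTranspose, conjTranspose_eq_transpose_of_trivial, sub_eq_iff_eq_add'] at hS
  exact ⟨Sᵀ, by rw [transpose_transpose, hS]⟩

/-- `⪯`-convexity on a convex set `s` of a matrix-valued map, the orthogonal factors depending on
the points and on the weights. On `s = Set.univ` this is `SqConvexMap`. -/
def SqConvexOn [DecidableEq ι] (s : Set E) (σ : E → Matrix m ι ℝ) : Prop :=
  Convex ℝ s ∧ ∀ ⦃x⦄, x ∈ s → ∀ ⦃y⦄, y ∈ s → ∀ ⦃a b : ℝ⦄, 0 ≤ a → 0 ≤ b → a + b = 1 →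
    ∃ O₁ ∈ orthogonalGroup ι ℝ, ∃ O₂ ∈ orthogonalGroup ι ℝ,
      SqLE (σ (a • x + b • y)) (a • (σ x * O₁) + b • (σ y * O₂))

lemma SqConvexOn.smul [DecidableEq ι] {s : Set E} {σ : E → Matrix m ι ℝ} (hσ : SqConvexOn s σ)
    (r : ℝ) : SqConvexOn s (r • σ) := by
  refine ⟨hσ.1, fun x hx y hy a b ha hb hab => ?_⟩
  obtain ⟨O₁, hO₁, O₂, hO₂, hle⟩ := hσ.2 hx hy ha hb hab
  refine ⟨O₁, hO₁, O₂, hO₂, ?_⟩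
  simpa only [Pi.smul_apply, smul_mul, smul_add, smul_comm r] using hle.smul r

lemma SqConvexMap.sqConvexOn {d q : ℕ} {σ : (Fin d → ℝ) → Matrix (Fin d) (Fin q) ℝ}
    (hσ : SqConvexMap σ) : SqConvexOn Set.univ σ := by
  refine ⟨convex_univ, fun x _ y _ a b ha hb hab => ?_⟩
  obtain rfl : b = 1 - a := by linarith
  obtain ⟨O₁, O₂, hO₁, hO₂, hle⟩ := hσ x y a ⟨ha, by linarith⟩
  exact ⟨O₁, (mem_orthogonalGroup_iff _ _).mpr hO₁, O₂, (mem_orthogonalGroup_iff _ _).mpr hO₂, hle⟩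

end SqConvexity

section GaussianExpectation

variable {m ι κ : Type*} [Fintype ι] [Fintype κ] {f : (m → ℝ) → ℝ}

lemma affineGaussian_mul_orthogonal [Finite m] [DecidableEq ι] (c : m → ℝ)
    (A : Matrix m ι ℝ) {O : Matrix ι ι ℝ} (hO : O ∈ orthogonalGroup ι ℝ) :
    affineGaussian c (A * O) = affineGaussian c A := by
  have hOOt : O * Oᵀ = 1 := (mem_orthogonalGroup_iff _ _).mp hO
  refine affineGaussian_congr c ?_
  rw [transpose_mul, Matrix.mul_assoc, ← Matrix.mul_assoc O, hOOt, Matrix.one_mul]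

lemma SqLE.integral_affineGaussian_le [Finite m] {A : Matrix m ι ℝ} {B : Matrix m κ ℝ}
    (hAB : SqLE A B) (c : m → ℝ) (hf : ConvexOn ℝ Set.univ f)
    (hA : Integrable f (affineGaussian c A)) (hB : Integrable f (affineGaussian c B)) :
    ∫ x, f x ∂(affineGaussian c A) ≤ ∫ x, f x ∂(affineGaussian c B) := by
  cases nonempty_fintype m
  obtain ⟨S, hS⟩ := hAB.exists_add_mul_transpose_eq
  have hconv : affineGaussian c A ∗ affineGaussian 0 S = affineGaussian c B := by
    rw [affineGaussian_conv c 0 hS, add_zero]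
  rw [← hconv] at hB ⊢
  exact integral_le_integral_conv_of_convexOn (integrable_id_affineGaussian 0 S)
    (integral_id_affineGaussian 0 S) hf hf.locallyLipschitz.continuous hA hB

lemma convexOn_integral_affineGaussian (hf : ConvexOn ℝ Set.univ f)
    (hint : ∀ (c : m → ℝ) (A : Matrix m ι ℝ), Integrable f (affineGaussian c A)) :
    ConvexOn ℝ Set.univ fun p : (m → ℝ) × Matrix m ι ℝ =>
      ∫ x, f x ∂(affineGaussian p.1 p.2) := by
  have hintegral (p : (m → ℝ) × Matrix m ι ℝ) : ∫ x, f x ∂(affineGaussian p.1 p.2) =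
      ∫ z, f (p.1 + p.2 *ᵥ z) ∂(Measure.pi fun _ : ι => gaussianReal 0 1) :=
    integral_map (measurable_const_add_mulVec _ _).aemeasurable (hint _ _).aestronglyMeasurable
  simp only [hintegral]
  refine integral_convexOn_of_integrand_ae convex_univ (.of_forall fun z => ?_)
    fun p _ => (hint p.1 p.2).comp_measurable (measurable_const_add_mulVec _ _)
  exact hf.comp_linearMap
    (LinearMap.fst ℝ (m → ℝ) (Matrix m ι ℝ) + (mulVecBilin ℝ ℝ).flip z ∘ₗ LinearMap.snd ℝ _ _)

theorem eulerStep_convexOn_general [Finite m] [DecidableEq ι] {E Ω : Type*} [AddCommGroup E]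
    [Module ℝ E] [MeasurableSpace Ω] {P : Measure Ω} {Z : Ω → ι → ℝ}
    (hZ : HasLaw Z (Measure.pi fun _ => gaussianReal 0 1) P) {s : Set E} {σ : E → Matrix m ι ℝ}
    (hσ : SqConvexOn s σ) (b : E →ᵃ[ℝ] (m → ℝ)) (hf : ConvexOn ℝ Set.univ f)
    (hint : ∀ (c : m → ℝ) (A : Matrix m ι ℝ), Integrable f (affineGaussian c A)) :
    ConvexOn ℝ s fun x => ∫ ω, f (b x + σ x *ᵥ Z ω) ∂P := by
  set F : (m → ℝ) × Matrix m ι ℝ → ℝ := fun p => ∫ x, f x ∂(affineGaussian p.1 p.2)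
  have hlaw (x : E) : ∫ ω, f (b x + σ x *ᵥ Z ω) ∂P = F (b x, σ x) :=
    (hasLaw_affineGaussian hZ (b x) (σ x)).integral_comp (hint _ _).aestronglyMeasurable
  simp only [hlaw]
  refine ⟨hσ.1, fun x hx y hy p q hp hq hpq => ?_⟩
  obtain ⟨O₁, hO₁, O₂, hO₂, hle⟩ := hσ.2 hx hy hp hq hpq
  calc F (b (p • x + q • y), σ (p • x + q • y))
      ≤ F (b (p • x + q • y), p • (σ x * O₁) + q • (σ y * O₂)) :=
        hle.integral_affineGaussian_le _ hf (hint _ _) (hint _ _)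
    _ = F (p • (b x, σ x * O₁) + q • (b y, σ y * O₂)) := by
        rw [Convex.combo_affine_apply hpq]
        rfl
    _ ≤ p • F (b x, σ x * O₁) + q • F (b y, σ y * O₂) :=
        (convexOn_integral_affineGaussian hf hint).2 (Set.mem_univ _) (Set.mem_univ _) hp hq hpq
    _ = p • F (b x, σ x) + q • F (b y, σ y) := by
        simp only [F, affineGaussian_mul_orthogonal _ _ hO₁, affineGaussian_mul_orthogonal _ _ hO₂]

end GaussianExpectation

/-- **Propagation of convexity by one Euler step with affine drift and `⪯`-convex volatility.**
If `Z` is a standard Gaussian vector on `ℝ^q`, `σ` is Lipschitz and `⪯`-convex, then for every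
convex `f : ℝ^d → ℝ` with at most linear growth, the map
`x ↦ E f(x + hκ(x − ζ) + √h σ(x) Z)` is convex. -/
theorem eulerStep_convexOn {d q : ℕ} {Ω : Type*} [MeasurableSpace Ω]
    (P : Measure Ω) [IsProbabilityMeasure P]
    (Z : Ω → Fin q → ℝ) (hZmeas : Measurable Z)
    (hZ : Measure.map Z P = Measure.pi fun _ => gaussianReal 0 1)
    (h κ : ℝ) (hh : 0 < h) (ζ : Fin d → ℝ)
    (σ : (Fin d → ℝ) → Matrix (Fin d) (Fin q) ℝ)
    (K : ℝ) (hσLip : ∀ x y i j, |σ x i j - σ y i j| ≤ K * ‖x - y‖)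
    (hσcvx : SqConvexMap σ)
    (f : (Fin d → ℝ) → ℝ) (hf : ConvexOn ℝ Set.univ f)
    (C : ℝ) (hgrowth : ∀ x, |f x| ≤ C * (1 + ‖x‖)) :
    ConvexOn ℝ Set.univ
      (fun x => ∫ ω, f (x + (h * κ) • (x - ζ) +
        Real.sqrt h • (σ x).mulVec (Z ω)) ∂P) := by
  have hint (c : Fin d → ℝ) (A : Matrix (Fin d) (Fin q) ℝ) : Integrable f (affineGaussian c A) :=
    integrable_of_norm_le_linear (integrable_id_affineGaussian c A)
      hf.locallyLipschitz.continuous.aestronglyMeasurable hgrowth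
  let drift : (Fin d → ℝ) →ᵃ[ℝ] (Fin d → ℝ) :=
    AffineMap.id ℝ _ + (h * κ) • (AffineMap.id ℝ _ - AffineMap.const ℝ _ ζ)
  simpa [drift, smul_mulVec] using
    eulerStep_convexOn_general ⟨hZmeas.aemeasurable, hZ⟩ (hσcvx.sqConvexOn.smul √h) drift hf hint
end

section
/- Under the standing assumptions on σ, β, h, λ and s_h, and assuming moreover that β is affine, the truncated Euler step is convex for the convex order: for every convex function f : ℝ → ℝ, the map x ↦ E f(E^h(x, Z̃^h)) is convex on ℝ. -/
open MeasureTheory ProbabilityTheory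

/-!
A symmetric unimodal density is a mixture of uniform densities on intervals `[-r, r]`, and
truncation only adds an atom at `0`, so the noise may be taken uniform. On a bounded interval a
convex function is, up to a constant, a mixture of the functions `y ↦ |y - k|`, so it may be taken
to be one of these. The expectation is then an explicit function of `α₀ + α₁ x`, the mean of the
step shifted by `k`, and of the half-width `T x = r √h σ x`. Where `T x₀ ≤ |α₀ + α₁ x₀|`, the
tangent of `|α₀ + α₁ x|` supports it at `x₀`. Elsewhere, linearizing `T²` up to its semi-convexity
defect gives a candidate tangent at `x₀`, which is a lower bound if the Lipschitz constant `L` and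
the semi-convexity constant `a` of `T` satisfy `L² + a ≤ ((2 - √2) α₁)²`. In the theorem
`α₁ > 1 / 2`, and `(2 - √2) / 2 = 1 / (2 + √2)`.
-/

open Set

lemma convexOn_univ_of_forall_exists_affine_le {g : ℝ → ℝ}
    (hg : ∀ x₀, ∃ p, ∀ x, g x₀ + p * (x - x₀) ≤ g x) : ConvexOn ℝ univ g := by
  refine ⟨convex_univ, fun x _ y _ μ ν hμ hν hμν => ?_⟩
  simp only [smul_eq_mul]
  obtain ⟨p, hp⟩ := hg (μ * x + ν * y)
  have hx := mul_le_mul_of_nonneg_left (hp x) hμ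
  have hy := mul_le_mul_of_nonneg_left (hp y) hν
  obtain rfl : μ = 1 - ν := by linarith
  linarith

lemma exists_affine_le_of_convexOn_univ {f : ℝ → ℝ} (hf : ConvexOn ℝ univ f) (x₀ : ℝ) :
    ∃ p, ∀ x, f x₀ + p * (x - x₀) ≤ f x := by
  refine ⟨derivWithin f (Ioi x₀) x₀, fun x => ?_⟩
  have h_int : x₀ ∈ interior univ := by simp
  rcases lt_trichotomy x x₀ with hx | rfl | hx
  · have h := (hf.slope_le_leftDeriv_of_mem_interior (mem_univ x) h_int hx).trans
      (hf.leftDeriv_le_rightDeriv_of_mem_interior h_int)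
    rw [slope_def_field, div_le_iff₀ (sub_pos.2 hx)] at h
    linarith
  · simp
  · have h := hf.rightDeriv_le_slope_of_mem_interior h_int (mem_univ x) hx
    rw [slope_def_field, le_div_iff₀ (sub_pos.2 hx)] at h
    linarith

lemma convexOn_integral {E α : Type*} [AddCommGroup E] [Module ℝ E] [MeasurableSpace α]
    {ν : Measure α} {s : Set E} {G : E → α → ℝ} (hs : Convex ℝ s)
    (hG : ∀ᵐ t ∂ν, ConvexOn ℝ s fun x => G x t) (h_int : ∀ x ∈ s, Integrable (G x) ν) :
    ConvexOn ℝ s fun x => ∫ t, G x t ∂ν := by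
  refine ⟨hs, fun x hx y hy a b ha hb hab => ?_⟩
  simp only [smul_eq_mul]
  have hax := (h_int x hx).const_mul a
  have hby := (h_int y hy).const_mul b
  rw [← integral_const_mul, ← integral_const_mul, ← integral_add hax hby]
  refine integral_mono_ae (h_int _ (hs hx hy ha hb hab)) (hax.add hby) ?_
  filter_upwards [hG] with t ht using ht.2 hx hy ha hb hab

lemma convexOn_comp_add_mul {f : ℝ → ℝ} (hf : ConvexOn ℝ univ f) (α₀ α₁ : ℝ) :
    ConvexOn ℝ univ fun x => f (α₀ + α₁ * x) := by
  simpa [Function.comp_def, AffineMap.lineMap_apply, add_comm, mul_comm] using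
    hf.comp_affineMap (AffineMap.lineMap α₀ (α₀ + α₁))

/-- The mean `E|m + tU|` for `U` uniform on `[-1, 1]` and `t ≥ 0`: it is `(t + m² / t) / 2` if
`|m| ≤ t` and `|m|` otherwise. At `m = t = 0` the convention `0 / 0 = 0` gives the right value. -/
noncomputable def uniformMeanAbs (m t : ℝ) : ℝ :=
  (max t |m| + m ^ 2 / max t |m|) / 2

lemma uniformMeanAbs_of_le {m t : ℝ} (h : t ≤ |m|) : uniformMeanAbs m t = |m| := by
  rw [uniformMeanAbs, max_eq_right h, ← sq_abs, sq, mul_self_div_self, add_self_div_two]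

lemma uniformMeanAbs_of_abs_le {m t : ℝ} (h : |m| ≤ t) :
    uniformMeanAbs m t = (t + m ^ 2 / t) / 2 := by
  rw [uniformMeanAbs, max_eq_left h]

lemma abs_le_uniformMeanAbs (m t : ℝ) : |m| ≤ uniformMeanAbs m t := by
  rcases le_or_gt t |m| with h | h
  · exact (uniformMeanAbs_of_le h).ge
  have ht : 0 < t := (abs_nonneg m).trans_lt h
  have hsq : (t + m ^ 2 / t) / 2 - |m| = (t - |m|) ^ 2 / (2 * t) := by
    rw [← sq_abs m]; field_simp; ring
  rw [uniformMeanAbs_of_abs_le h.le, ← sub_nonneg, hsq]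
  positivity

lemma integral_abs (u v : ℝ) : ∫ y in u..v, |y| = (v * |v| - u * |u|) / 2 := by
  have hderiv (y : ℝ) (hy : y ≠ 0) : HasDerivAt (fun y => y * |y| / 2) |y| y := by
    refine (((hasDerivAt_id y).mul (hasDerivAt_abs hy)).div_const 2).congr_deriv ?_
    simp only [id, one_mul, self_mul_sign, add_self_div_two]
  rw [integral_eq_of_hasDerivAt_off_countable _ _ (countable_singleton 0)
    (by fun_prop) (fun y hy => hderiv y hy.2) (continuous_abs.intervalIntegrable _ _)]
  ring

lemma integral_abs_add_mul {r s : ℝ} (hr : 0 ≤ r) (hs : 0 ≤ s) (m : ℝ) :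
    ∫ w in -r..r, |m + s * w| = 2 * r * uniformMeanAbs m (r * s) := by
  rcases hs.eq_or_lt with rfl | hs
  · simp [uniformMeanAbs_of_le, two_mul]
  rw [intervalIntegral.integral_comp_add_mul (fun y => |y|) hs.ne', integral_abs, smul_eq_mul]
  rcases le_or_gt (r * s) |m| with h | h
  · rw [uniformMeanAbs_of_le h]
    rcases le_total 0 m with hm | hm
    · rw [abs_of_nonneg hm] at *
      rw [abs_of_nonneg (by nlinarith), abs_of_nonneg (by nlinarith)]
      field_simp
      ring
    · rw [abs_of_nonpos hm] at *
      rw [abs_of_nonpos (by nlinarith), abs_of_nonpos (by nlinarith)]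
      field_simp
      ring
  · obtain ⟨h1, h2⟩ := abs_lt.1 h
    have hr : r ≠ 0 := by rintro rfl; linarith
    rw [uniformMeanAbs_of_abs_le h.le, abs_of_nonneg (by nlinarith), abs_of_nonpos (by nlinarith)]
    field_simp
    ring

lemma mul_one_sub_sq_mul_le_sq {e t₀ τ Δ q : ℝ} (he : |e| ≤ 1) (ht₀ : 0 < t₀) (hτ0 : 0 < τ)
    (hΔ : |e * t₀ + Δ| ≤ τ) (hτ : |τ - t₀| ≤ (2 - √2) * |Δ|)
    (hq : t₀ * (q - (τ - t₀)) ≤ ((√2 - 1) * Δ) ^ 2) :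
    τ * ((1 - e ^ 2) * (q - (τ - t₀))) ≤ (Δ - e * (τ - t₀)) ^ 2 := by
  wlog hΔ0 : 0 ≤ Δ generalizing e Δ
  · have h_neg := this (e := -e) (Δ := -Δ) (by rwa [abs_neg])
      (by rwa [neg_mul, ← neg_add, abs_neg]) (by rwa [abs_neg]) (by rwa [mul_neg, neg_sq])
      (by linarith)
    linarith
  rw [abs_of_nonneg hΔ0] at hτ
  set κ := √2 - 1 with hκ
  have hκ0 : 0 ≤ κ := by rw [hκ, sub_nonneg, Real.one_le_sqrt]; norm_num
  have heδ : e * (τ - t₀) ≤ (1 - κ) * Δ :=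
    calc e * (τ - t₀) ≤ |e| * |τ - t₀| := by rw [← abs_mul]; exact le_abs_self _
      _ ≤ 1 * ((2 - √2) * Δ) := by gcongr
      _ = (1 - κ) * Δ := by ring
  have hκΔ : κ * Δ ≤ Δ - e * (τ - t₀) := by linarith
  have hκΔ0 : 0 ≤ κ * Δ := by positivity
  have hmain : τ * (κ * Δ) ^ 2 ≤ t₀ * (Δ - e * (τ - t₀)) ^ 2 := by
    rcases le_total τ t₀ with h | h
    · gcongr
    · have hτΔ : τ * (Δ - (τ - t₀)) ≤ t₀ * (Δ - e * (τ - t₀)) := by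
        have : 0 ≤ (τ - t₀) * (τ - (e * t₀ + Δ)) :=
          mul_nonneg (sub_nonneg.2 h) (sub_nonneg.2 (abs_le.1 hΔ).2)
        linarith
      have hκτ : κ * Δ ≤ Δ - (τ - t₀) := by linarith [le_abs_self (τ - t₀)]
      calc τ * (κ * Δ) ^ 2 = τ * (κ * Δ) * (κ * Δ) := by ring
        _ ≤ τ * (Δ - (τ - t₀)) * (Δ - e * (τ - t₀)) := by
          gcongr; exact mul_nonneg hτ0.le (hκΔ0.trans hκτ)
        _ ≤ t₀ * (Δ - e * (τ - t₀)) * (Δ - e * (τ - t₀)) :=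
          mul_le_mul_of_nonneg_right hτΔ (hκΔ0.trans hκΔ)
        _ = _ := by ring
  have he2 : 0 ≤ 1 - e ^ 2 := sub_nonneg.2 ((sq_le_one_iff_abs_le_one e).2 he)
  refine le_of_mul_le_mul_left ?_ ht₀
  calc t₀ * (τ * ((1 - e ^ 2) * (q - (τ - t₀))))
      = τ * ((1 - e ^ 2) * (t₀ * (q - (τ - t₀)))) := by ring
    _ ≤ τ * ((1 - e ^ 2) * (κ * Δ) ^ 2) := by gcongr
    _ ≤ τ * (1 * (κ * Δ) ^ 2) := by gcongr; linarith [sq_nonneg e]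
    _ ≤ t₀ * (Δ - e * (τ - t₀)) ^ 2 := by rwa [one_mul]

/- The left-hand side is the tangent of `(t + m² / t) / 2` at `(e t₀, t₀)`, evaluated at the
increment `(Δ, q)`, where `q` linearizes the half-width. The mean only depends on `τ = max t |m|`,
so the half-width may be raised to `τ`; clearing denominators leaves `mul_one_sub_sq_mul_le_sq`. -/
lemma tangent_le_uniformMeanAbs {e t₀ t Δ q ℓ A : ℝ} (he : |e| ≤ 1) (ht₀ : 0 < t₀)
    (ht : |t - t₀| ≤ ℓ) (hA : 0 ≤ A) (hℓ : ℓ ^ 2 + A ≤ ((2 - √2) * Δ) ^ 2)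
    (ht0 : 0 ≤ t) (hq : q ≤ ℓ) (hq2 : t₀ ^ 2 + 2 * t₀ * q ≤ t ^ 2 + A) :
    t₀ * (1 + e ^ 2) / 2 + e * Δ + (1 - e ^ 2) / 2 * q ≤ uniformMeanAbs (e * t₀ + Δ) t := by
  have hsqrt2 : √2 ^ 2 = 2 := Real.sq_sqrt zero_le_two
  have hθ0 : 0 ≤ 2 - √2 := by nlinarith [Real.sqrt_nonneg 2]
  have hθ1 : 2 - √2 < 1 := by nlinarith [Real.sqrt_nonneg 2]
  have hℓΔ : ℓ ≤ (2 - √2) * |Δ| := by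
    rw [← abs_of_nonneg hθ0, ← abs_mul]
    exact (le_abs_self ℓ).trans (sq_le_sq.1 (by linarith))
  set τ := max t |e * t₀ + Δ| with hτ
  have htτ : t ≤ τ := le_max_left _ _
  have hmτ : |e * t₀ + Δ| ≤ τ := le_max_right _ _
  have het₀ : |e * t₀| ≤ t₀ := by
    rw [abs_mul, abs_of_pos ht₀]; exact mul_le_of_le_one_left ht₀.le he
  have hτ0 : 0 < τ := by
    have hΔ : |Δ| ≤ τ + t₀ := by
      have := abs_sub_abs_le_abs_add Δ (e * t₀)
      rw [add_comm Δ] at this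
      linarith
    by_contra! hτ0
    nlinarith [(abs_le.1 ht).1, abs_nonneg Δ]
  have hnum : 0 ≤ (Δ - e * (τ - t₀)) ^ 2 - τ * ((1 - e ^ 2) * (q - (τ - t₀))) := by
    have he2 : 0 ≤ 1 - e ^ 2 := sub_nonneg.2 ((sq_le_one_iff_abs_le_one e).2 he)
    rcases le_or_gt q (τ - t₀) with hqτ | hqτ
    · have : (1 - e ^ 2) * (q - (τ - t₀)) ≤ 0 := mul_nonpos_of_nonneg_of_nonpos he2 (by linarith)
      have := mul_nonpos_of_nonneg_of_nonpos hτ0.le this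
      linarith [sq_nonneg (Δ - e * (τ - t₀))]
    · have hτℓ : |τ - t₀| ≤ ℓ := abs_le.2 ⟨by linarith [(abs_le.1 ht).1], by linarith⟩
      have hτℓ2 : (τ - t₀) ^ 2 ≤ ℓ ^ 2 := sq_le_sq.2 (hτℓ.trans (le_abs_self ℓ))
      have htτ2 : t ^ 2 ≤ τ ^ 2 := by gcongr
      refine sub_nonneg.2 (mul_one_sub_sq_mul_le_sq he ht₀ hτ0 hmτ (hτℓ.trans hℓΔ) ?_)
      have hκ : ((2 - √2) * Δ) ^ 2 = 2 * ((√2 - 1) * Δ) ^ 2 := by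
        linear_combination (-Δ ^ 2) * hsqrt2
      linarith
  have hdiff : (τ + (e * t₀ + Δ) ^ 2 / τ) / 2
      - (t₀ * (1 + e ^ 2) / 2 + e * Δ + (1 - e ^ 2) / 2 * q)
      = ((Δ - e * (τ - t₀)) ^ 2 - τ * ((1 - e ^ 2) * (q - (τ - t₀)))) / (2 * τ) := by
    field_simp
    ring
  rw [uniformMeanAbs, ← hτ, ← sub_nonneg, hdiff]
  positivity

lemma abs_le_of_sq_add_mul_le {T : ℝ → ℝ} {L a p x₀ : ℝ} (hT0 : ∀ x, 0 ≤ T x)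
    (hTLip : ∀ x, |T x - T x₀| ≤ L * |x - x₀|)
    (hp : ∀ x, T x₀ ^ 2 + p * (x - x₀) ≤ T x ^ 2 + a * (x - x₀) ^ 2) : |p| ≤ 2 * T x₀ * L := by
  have hquad (d : ℝ) : p * d ≤ 2 * T x₀ * L * |d| + (L ^ 2 + a) * |d| ^ 2 := by
    have hd := hp (x₀ + d)
    have hLip := hTLip (x₀ + d)
    rw [add_sub_cancel_left] at hd hLip
    have hsq : T (x₀ + d) ^ 2 ≤ (T x₀ + L * |d|) ^ 2 :=
      pow_le_pow_left₀ (hT0 _) (by linarith [le_abs_self (T (x₀ + d) - T x₀)]) 2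
    rw [← sq_abs d] at hd
    linarith
  have hbound : ∀ d > 0, |p| ≤ 2 * T x₀ * L + (L ^ 2 + a) * d := fun d hd => by
    refine le_of_mul_le_mul_right ?_ hd
    have h1 := hquad d
    have h2 := hquad (-d)
    rw [abs_neg] at h2
    rw [abs_of_pos hd] at h1 h2
    rcases abs_cases p with ⟨h, -⟩ | ⟨h, -⟩ <;> rw [h] <;> linarith
  have hlim : Filter.Tendsto (fun d => 2 * T x₀ * L + (L ^ 2 + a) * d) (nhdsWithin 0 (Ioi 0))
      (nhds (2 * T x₀ * L)) := by
    exact tendsto_nhdsWithin_of_tendsto_nhds (Continuous.tendsto' (by fun_prop) _ _ (by simp))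
  exact ge_of_tendsto hlim (eventually_nhdsWithin_of_forall hbound)

lemma exists_sq_add_mul_le {T : ℝ → ℝ} {L a : ℝ} (hT0 : ∀ x, 0 ≤ T x)
    (hTLip : ∀ x y, |T x - T y| ≤ L * |x - y|)
    (hTsc : ConvexOn ℝ univ fun x => T x ^ 2 + a * x ^ 2) (x₀ : ℝ) :
    ∃ p, |p| ≤ 2 * T x₀ * L ∧
      ∀ x, T x₀ ^ 2 + p * (x - x₀) ≤ T x ^ 2 + a * (x - x₀) ^ 2 := by
  obtain ⟨p, hp⟩ := exists_affine_le_of_convexOn_univ hTsc x₀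
  have h_le (x : ℝ) :
      T x₀ ^ 2 + (p - 2 * a * x₀) * (x - x₀) ≤ T x ^ 2 + a * (x - x₀) ^ 2 := by
    linarith [hp x]
  exact ⟨p - 2 * a * x₀, abs_le_of_sq_add_mul_le hT0 (fun x => hTLip x x₀) h_le, h_le⟩

lemma convexOn_uniformMeanAbs {T : ℝ → ℝ} {L a α₀ α₁ : ℝ} (hT0 : ∀ x, 0 ≤ T x)
    (hTLip : ∀ x y, |T x - T y| ≤ L * |x - y|) (ha : 0 ≤ a)
    (hTsc : ConvexOn ℝ univ fun x => T x ^ 2 + a * x ^ 2)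
    (hLa : L ^ 2 + a ≤ ((2 - √2) * α₁) ^ 2) :
    ConvexOn ℝ univ fun x => uniformMeanAbs (α₀ + α₁ * x) (T x) := by
  refine convexOn_univ_of_forall_exists_affine_le fun x₀ => ?_
  rcases le_or_gt (T x₀) |α₀ + α₁ * x₀| with h0 | h0
  · obtain ⟨p, hp⟩ := exists_affine_le_of_convexOn_univ
      (convexOn_comp_add_mul (f := fun y => |y|) convexOn_univ_norm α₀ α₁) x₀
    refine ⟨p, fun x => ?_⟩
    rw [uniformMeanAbs_of_le h0]
    exact (hp x).trans (abs_le_uniformMeanAbs _ _)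
  set m₀ := α₀ + α₁ * x₀
  set t₀ := T x₀
  have ht₀pos : 0 < t₀ := (abs_nonneg _).trans_lt h0
  obtain ⟨p, hpL, hp⟩ := exists_sq_add_mul_le hT0 hTLip hTsc x₀
  refine ⟨m₀ / t₀ * α₁ + (1 - (m₀ / t₀) ^ 2) / 2 * (p / (2 * t₀)), fun x => ?_⟩
  have he : |m₀ / t₀| ≤ 1 := by
    rw [abs_div, abs_of_pos ht₀pos]
    exact (div_le_one ht₀pos).2 h0.le
  have hℓ : (L * |x - x₀|) ^ 2 + a * (x - x₀) ^ 2 ≤ ((2 - √2) * (α₁ * (x - x₀))) ^ 2 := by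
    rw [mul_pow, sq_abs, ← add_mul, ← mul_assoc, mul_pow _ (x - x₀)]
    gcongr
  have hq : p / (2 * t₀) * (x - x₀) ≤ L * |x - x₀| := by
    refine (le_abs_self _).trans ?_
    rw [abs_mul, abs_div, abs_of_pos (mul_pos two_pos ht₀pos)]
    gcongr
    rwa [div_le_iff₀' (by positivity)]
  have hq2 : t₀ ^ 2 + 2 * t₀ * (p / (2 * t₀) * (x - x₀)) ≤ T x ^ 2 + a * (x - x₀) ^ 2 := by
    convert hp x using 2
    field_simp
  have htangent := tangent_le_uniformMeanAbs he ht₀pos (hTLip x x₀) (by positivity) hℓ (hT0 x) hq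
    hq2
  have hm : m₀ / t₀ * t₀ + α₁ * (x - x₀) = α₀ + α₁ * x := by
    rw [div_mul_cancel₀ _ ht₀pos.ne']; ring
  rw [hm] at htangent
  refine le_trans (le_of_eq ?_) htangent
  rw [uniformMeanAbs_of_abs_le h0.le]
  field_simp
  ring

lemma exists_stieltjes_integral_eq_sub_of_convexOn {f : ℝ → ℝ} (hf : ConvexOn ℝ univ f) :
    ∃ G : StieltjesFunction ℝ, ∀ u y, ∫ x in u..y, G x = f y - f u := by
  have hmono : Monotone fun x => derivWithin f (Ioi x) x := by
    simpa [monotoneOn_univ] using hf.monotoneOn_rightDeriv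
  refine ⟨hmono.stieltjesFunction, fun u y => ?_⟩
  have hae : ∀ᵐ x, hmono.stieltjesFunction x = derivWithin f (Ioi x) x := by
    have hnull := hmono.countable_not_continuousAt.measure_zero volume
    filter_upwards [measure_eq_zero_iff_ae_notMem.1 hnull] with x hx
    rw [hmono.stieltjesFunction_eq]
    exact (not_not.1 hx : ContinuousAt _ x).continuousWithinAt.rightLim_eq
  rw [intervalIntegral.integral_congr_ae (hae.mono fun x hx _ => hx)]
  refine intervalIntegral.integral_eq_sub_of_hasDeriv_right ?_ (fun x _ => ?_)
    hmono.intervalIntegrable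
  · exact (continuousOn_univ.1 (hf.continuousOn isOpen_univ)).continuousOn
  · exact hf.hasDerivWithinAt_rightDeriv_of_mem_interior (by simp)

lemma setIntegral_max_sub_stieltjes (G : StieltjesFunction ℝ) {u v y : ℝ} (hy : y ∈ Icc u v) :
    ∫ k in Ioc u v, max (y - k) 0 ∂G.measure = (∫ x in u..y, G x) - (y - u) * G u := by
  have h_int : Integrable (fun k => max (y - k) 0) (G.measure.restrict (Ioc u v)) :=
    ((by fun_prop : Continuous fun k => max (y - k) 0).continuousOn.integrableOn_compact
      isCompact_Icc).mono_set Ioc_subset_Icc_self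
  have hM : (fun k => max (y - k) 0) ≤ᵐ[G.measure.restrict (Ioc u v)] fun _ => y - u := by
    filter_upwards [ae_restrict_mem measurableSet_Ioc] with k hk
    exact max_le (by linarith [hk.1]) (by linarith [hy.1])
  have hsuper (t : ℝ) (ht : t ∈ Ioc 0 (y - u)) :
      (G.measure.restrict (Ioc u v)).real {k | t ≤ max (y - k) 0} = G (y - t) - G u := by
    have hset : {k | t ≤ max (y - k) 0} ∩ Ioc u v = Ioc u (y - t) := by
      ext k
      simp only [mem_inter_iff, mem_ofPred_eq, le_max_iff, ht.1.not_ge, or_false, mem_Ioc]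
      constructor
      · rintro ⟨h, h', -⟩
        exact ⟨h', by linarith⟩
      · rintro ⟨h, h'⟩
        exact ⟨by linarith, h, by linarith [ht.1, hy.2]⟩
    rw [measureReal_restrict_apply (measurableSet_le (by fun_prop) (by fun_prop)), hset,
      measureReal_def, G.measure_Ioc,
      ENNReal.toReal_ofReal (sub_nonneg.2 (G.mono (by linarith [ht.2])))]
  rw [h_int.integral_eq_integral_Ioc_meas_le (ae_of_all _ fun k => le_max_right _ _) hM,
    setIntegral_congr_fun measurableSet_Ioc hsuper,
    ← intervalIntegral.integral_of_le (sub_nonneg.2 hy.1),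
    intervalIntegral.integral_comp_sub_left (fun x => G x - G u), sub_sub_cancel, sub_zero,
    intervalIntegral.integral_sub G.mono.intervalIntegrable intervalIntegrable_const,
    intervalIntegral.integral_const, smul_eq_mul]

lemma setIntegral_abs_sub_stieltjes (G : StieltjesFunction ℝ) {u v y : ℝ} (hy : y ∈ Icc u v) :
    ∫ k in Ioc u v, |y - k| ∂G.measure = 2 * (∫ x in u..y, G x) - 2 * (y - u) * G u
      - (G v - G u) * y + ∫ k in Ioc u v, k ∂G.measure := by
  have h_int {g : ℝ → ℝ} (hg : Continuous g) : IntegrableOn g (Ioc u v) G.measure :=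
    (hg.continuousOn.integrableOn_compact isCompact_Icc).mono_set Ioc_subset_Icc_self
  have habs (k : ℝ) : |y - k| = 2 * max (y - k) 0 - (y - k) := by
    rcases abs_cases (y - k) with ⟨h, h'⟩ | ⟨h, h'⟩
    · rw [h, max_eq_left h']; ring
    · rw [h, max_eq_right h'.le]; ring
  have hmass : G.measure.real (Ioc u v) = G v - G u := by
    rw [measureReal_def, G.measure_Ioc,
      ENNReal.toReal_ofReal (sub_nonneg.2 (G.mono (hy.1.trans hy.2)))]
  simp only [habs]
  rw [integral_sub (h_int (by fun_prop)) (h_int (by fun_prop)), integral_const_mul,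
    setIntegral_max_sub_stieltjes G hy, integral_sub (h_int (by fun_prop)) (h_int (by fun_prop)),
    setIntegral_const, hmass, smul_eq_mul]
  ring

lemma exists_eq_add_integral_abs_sub_of_convexOn {f : ℝ → ℝ} (hf : ConvexOn ℝ univ f) {u v : ℝ}
    (huv : u ≤ v) : ∃ (c : ℝ) (μ : Measure ℝ), IsFiniteMeasure μ ∧ (∀ᵐ k ∂μ, k ∈ Icc u v) ∧
      ∀ y ∈ Icc u v, f y = c + ∫ k, |y - k| ∂μ := by
  obtain ⟨G, hG⟩ := exists_stieltjes_integral_eq_sub_of_convexOn hf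
  have hfin : IsFiniteMeasure (G.measure.restrict (Ioc u v)) :=
    isFiniteMeasure_restrict.2 measure_Ioc_lt_top.ne
  -- On `[u, v]` a linear function `β y` is `β⁺ |y - u| + β⁻ |y - v|` up to a constant.
  let β := (G u + G v) / 2
  let c := f u - u * G u - 2⁻¹ * ∫ k in Ioc u v, k ∂G.measure
  refine ⟨c + max β 0 * u - max (-β) 0 * v,
    (2⁻¹ : NNReal) • G.measure.restrict (Ioc u v)
      + (β.toNNReal • Measure.dirac u + (-β).toNNReal • Measure.dirac v),
    inferInstance, ?_, fun y hy => ?_⟩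
  · rw [ae_add_measure_iff, ae_add_measure_iff]
    refine ⟨Measure.ae_smul_measure ((ae_restrict_mem measurableSet_Ioc).mono fun k hk =>
        Ioc_subset_Icc_self hk) _,
      Measure.ae_smul_measure ?_ _, Measure.ae_smul_measure ?_ _⟩ <;>
    simp [ae_dirac_eq, huv]
  · have h_dirac (x : ℝ) (r : NNReal) : Integrable (fun k => |y - k|) (r • Measure.dirac x) :=
      (integrable_dirac (by simp)).smul_measure_nnreal
    have h_stieltjes : IntegrableOn (fun k => |y - k|) (Ioc u v) G.measure :=
      ((by fun_prop : Continuous fun k => |y - k|).continuousOn.integrableOn_compact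
        isCompact_Icc).mono_set Ioc_subset_Icc_self
    rw [integral_add_measure h_stieltjes.smul_measure_nnreal
        ((h_dirac u _).add_measure (h_dirac v _)),
      integral_add_measure (h_dirac u _) (h_dirac v _)]
    simp only [integral_smul_nnreal_measure, integral_dirac, NNReal.smul_def, smul_eq_mul,
      Real.coe_toNNReal', NNReal.coe_inv, NNReal.coe_ofNat, setIntegral_abs_sub_stieltjes G hy, hG,
      abs_of_nonneg (sub_nonneg.2 hy.1), abs_of_nonpos (sub_nonpos.2 hy.2)]
    linear_combination -y * max_zero_sub_max_neg_zero_eq_self β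

lemma convexOn_integral_comp_of_convexOn_integral_abs_sub {E α : Type*} [AddCommGroup E]
    [Module ℝ E] [MeasurableSpace α] {ν : Measure α} [IsFiniteMeasure ν] {s : Set E}
    {Y : E → α → ℝ} (hY : ∀ x ∈ s, AEStronglyMeasurable (Y x) ν)
    (hY_bdd : ∀ x ∈ s, ∃ M, ∀ᵐ w ∂ν, |Y x w| ≤ M)
    (h_abs : ∀ k, ConvexOn ℝ s fun x => ∫ w, |Y x w - k| ∂ν)
    {f : ℝ → ℝ} (hf : ConvexOn ℝ univ f) : ConvexOn ℝ s fun x => ∫ w, f (Y x w) ∂ν := by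
  have hs : Convex ℝ s := (h_abs 0).1
  refine ⟨hs, fun x hx y hy p q hp hq hpq => ?_⟩
  have hz := hs hx hy hp hq hpq
  obtain ⟨M₁, h₁⟩ := hY_bdd x hx
  obtain ⟨M₂, h₂⟩ := hY_bdd y hy
  obtain ⟨M₃, h₃⟩ := hY_bdd _ hz
  let M := |M₁| + |M₂| + |M₃|
  obtain ⟨c, μ, hμ, hμ_supp, hf_eq⟩ :=
    exists_eq_add_integral_abs_sub_of_convexOn hf (neg_le_self (by positivity : 0 ≤ M))
  have hY_int (x) (hx : x ∈ s) : Integrable (Y x) ν :=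
    (hY_bdd x hx).elim fun M hM => .of_bound (hY x hx) M hM
  have h_prod (x) (hx : x ∈ s) : Integrable (fun p : α × ℝ => |Y x p.1 - p.2|) (ν.prod μ) :=
    (((hY_int x hx).comp_fst μ).sub (Integrable.comp_snd
      (.of_bound aestronglyMeasurable_id M (hμ_supp.mono fun k => abs_le.2)) ν)).abs
  have h_fubini (x) (hx : x ∈ s) (hM : ∀ᵐ w ∂ν, |Y x w| ≤ M) :
      ∫ w, f (Y x w) ∂ν = ν.real univ • c + ∫ k, ∫ w, |Y x w - k| ∂ν ∂μ := by
    rw [integral_congr_ae (hM.mono fun w hw => hf_eq _ (abs_le.1 hw)),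
      integral_add (integrable_const c) (h_prod x hx).integral_prod_left, integral_const,
      integral_integral_swap (h_prod x hx)]
  have h_mix : ConvexOn ℝ s fun x => ν.real univ • c + ∫ k, ∫ w, |Y x w - k| ∂ν ∂μ :=
    (convexOn_const _ hs).add
      (convexOn_integral hs (ae_of_all _ h_abs) fun x hx => (h_prod x hx).integral_prod_right)
  have h_le : M₁ ≤ M ∧ M₂ ≤ M ∧ M₃ ≤ M := by
    refine ⟨?_, ?_, ?_⟩ <;>
      linarith [le_abs_self M₁, le_abs_self M₂, le_abs_self M₃, abs_nonneg M₁, abs_nonneg M₂,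
        abs_nonneg M₃]
  dsimp only
  rw [h_fubini x hx (h₁.mono fun w hw => hw.trans h_le.1),
    h_fubini y hy (h₂.mono fun w hw => hw.trans h_le.2.1),
    h_fubini _ hz (h₃.mono fun w hw => hw.trans h_le.2.2)]
  exact h_mix.2 hx hy hp hq hpq

section Superlevel

variable {α : Type*} [MeasurableSpace α] {ν : Measure α} {F φ : α → ℝ}

lemma volume_restrict_Ioi_zero_Iio (r : ℝ) :
    volume.restrict (Ioi 0) (Iio r) = ENNReal.ofReal r := by
  rw [Measure.restrict_apply measurableSet_Iio, inter_comm, Ioi_inter_Iio, Real.volume_Ioo,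
    sub_zero]

lemma setIntegral_Ioi_zero_indicator_Iio {r : ℝ} (hr : 0 ≤ r) (c : ℝ) :
    ∫ t in Ioi 0, (Iio r).indicator (fun _ => c) t = c * r := by
  rw [integral_indicator_const _ measurableSet_Iio, measureReal_def, volume_restrict_Ioi_zero_Iio,
    ENNReal.toReal_ofReal hr, smul_eq_mul, mul_comm]

lemma integrable_prod_indicator_Iio (hφ : Measurable φ) (hφ0 : ∀ w, 0 ≤ φ w)
    (hF : AEStronglyMeasurable F ν) (hFφ : Integrable (fun w => F w * φ w) ν) :
    Integrable (fun p : α × ℝ => (Iio (φ p.1)).indicator (fun _ => F p.1) p.2)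
      (ν.prod (volume.restrict (Ioi 0))) := by
  have h_meas : AEStronglyMeasurable
      (fun p : α × ℝ => (Iio (φ p.1)).indicator (fun _ => F p.1) p.2)
      (ν.prod (volume.restrict (Ioi 0))) :=
    hF.comp_fst.indicator (measurableSet_lt measurable_snd (hφ.comp measurable_fst))
  refine (integrable_prod_iff h_meas).2 ⟨ae_of_all _ fun w => ?_, ?_⟩
  · exact IntegrableOn.integrable_indicator (s := Iio (φ w)) (f := fun _ => F w)
      (integrableOn_const (volume_restrict_Ioi_zero_Iio _ ▸ ENNReal.ofReal_ne_top))
      measurableSet_Iio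
  · refine hFφ.norm.congr (ae_of_all _ fun w => ?_)
    simp only [norm_indicator_eq_indicator_norm]
    rw [setIntegral_Ioi_zero_indicator_Iio (hφ0 w), norm_mul, Real.norm_of_nonneg (hφ0 w)]

lemma convexOn_integral_mul_of_superlevel [SFinite ν] {E : Type*} [AddCommGroup E] [Module ℝ E]
    {s : Set E} {Φ : E → α → ℝ} (hφ : Measurable φ) (hφ0 : ∀ w, 0 ≤ φ w)
    (hΦ : ∀ x ∈ s, AEStronglyMeasurable (Φ x) ν)
    (hΦφ : ∀ x ∈ s, Integrable (fun w => Φ x w * φ w) ν)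
    (h_superlevel : ∀ t > 0, ConvexOn ℝ s fun x => ∫ w in {w | t < φ w}, Φ x w ∂ν) :
    ConvexOn ℝ s fun x => ∫ w, Φ x w * φ w ∂ν := by
  have h_indicator (x : E) (t : ℝ) : ∫ w in {w | t < φ w}, Φ x w ∂ν
      = ∫ w, (Iio (φ w)).indicator (fun _ => Φ x w) t ∂ν :=
    (integral_indicator (measurableSet_lt measurable_const hφ)).symm
  have h_prod (x) (hx : x ∈ s) := integrable_prod_indicator_Iio hφ hφ0 (hΦ x hx) (hΦφ x hx)
  have h_layers : ConvexOn ℝ s fun x => ∫ t in Ioi 0, ∫ w in {w | t < φ w}, Φ x w ∂ν := by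
    refine convexOn_integral (h_superlevel 1 one_pos).1
      ((ae_restrict_mem measurableSet_Ioi).mono h_superlevel) fun x hx => ?_
    simp only [h_indicator]
    exact (h_prod x hx).integral_prod_right
  refine h_layers.congr fun x hx => ?_
  simp only [h_indicator]
  rw [← integral_integral_swap (f := fun w => (Iio (φ w)).indicator fun _ => Φ x w) (h_prod x hx)]
  simp only [setIntegral_Ioi_zero_indicator_Iio (hφ0 _)]

end Superlevel

/-- A symmetric unimodal function on `ℝ`, i.e. one that is nonincreasing in the modulus of its
argument. It stands for the density of the noise; the case `|u| = |v|` encodes symmetry. -/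
def IsSymmUnimodal (φ : ℝ → ℝ) : Prop :=
  ∀ ⦃u v⦄, |u| ≤ |v| → φ v ≤ φ u

lemma IsSymmUnimodal.measurable {φ : ℝ → ℝ} (hφ : IsSymmUnimodal φ) : Measurable φ := by
  have h_anti : Antitone fun r => φ (max r 0) := fun r r' h => hφ <| by
    rw [abs_of_nonneg (le_max_right _ _), abs_of_nonneg (le_max_right _ _)]
    exact max_le_max_right 0 h
  have h_eq : φ = (fun r => φ (max r 0)) ∘ abs := by
    funext u
    simp only [Function.comp_apply, max_eq_left (abs_nonneg u)]
    exact le_antisymm (hφ (abs_abs u).le) (hφ (abs_abs u).ge)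
  rw [h_eq]
  exact h_anti.measurable.comp measurable_abs

lemma exists_ae_eq_Icc_neg_self {A : Set ℝ} {b : ℝ} (hb : 0 ≤ b) (hAb : A ⊆ Icc (-b) b)
    (hA : ∀ ⦃u v⦄, |u| ≤ |v| → v ∈ A → u ∈ A) :
    ∃ r ∈ Icc 0 b, A =ᵐ[volume] Icc (-r) r := by
  rcases A.eq_empty_or_nonempty with rfl | hne
  · refine ⟨0, left_mem_Icc.2 hb, ?_⟩
    rw [neg_zero, Icc_self]
    exact (ae_eq_empty.2 (measure_singleton (0 : ℝ))).symm
  have h_bdd : BddAbove A := ⟨b, fun v hv => (hAb hv).2⟩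
  have h_abs_le : ∀ v ∈ A, |v| ≤ sSup A := fun v hv =>
    le_csSup h_bdd (hA (abs_abs v).le hv)
  have h_lower : Ioo (-sSup A) (sSup A) ⊆ A := fun w hw => by
    obtain ⟨v, hv, hwv⟩ := exists_lt_of_lt_csSup hne (abs_lt.2 hw)
    exact hA (hwv.le.trans (le_abs_self v)) hv
  have h_upper : A ⊆ Icc (-sSup A) (sSup A) := fun v hv => abs_le.1 (h_abs_le v hv)
  obtain ⟨v, hv⟩ := hne
  refine ⟨sSup A, ⟨(abs_nonneg v).trans (h_abs_le v hv), csSup_le ⟨v, hv⟩ fun v hv => (hAb hv).2⟩,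
    h_upper.eventuallyLE.antisymm ?_⟩
  exact Ioo_ae_eq_Icc.symm.le.trans h_lower.eventuallyLE

lemma IsSymmUnimodal.convexOn_setIntegral_mul {E : Type*} [AddCommGroup E] [Module ℝ E] {s : Set E}
    {Φ : E → ℝ → ℝ} {φ : ℝ → ℝ} {b : ℝ} (hφ : IsSymmUnimodal φ) (hφ0 : ∀ w, 0 ≤ φ w) (hb : 0 ≤ b)
    (hΦ : ∀ x ∈ s, IntegrableOn (Φ x) (Icc (-b) b))
    (h_uniform : ∀ r ∈ Icc 0 b, ConvexOn ℝ s fun x => ∫ w in -r..r, Φ x w) :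
    ConvexOn ℝ s fun x => ∫ w in Icc (-b) b, Φ x w * φ w := by
  refine convexOn_integral_mul_of_superlevel hφ.measurable hφ0
    (fun x hx => (hΦ x hx).aestronglyMeasurable) (fun x hx => ?_) fun t _ => ?_
  · refine (hΦ x hx).mul_bdd (c := φ 0) hφ.measurable.aestronglyMeasurable (ae_of_all _ fun w => ?_)
    rw [Real.norm_of_nonneg (hφ0 w)]
    exact hφ (by simp)
  · obtain ⟨r, hr, h_ae⟩ := exists_ae_eq_Icc_neg_self hb
      (inter_subset_right : {w | t < φ w} ∩ Icc (-b) b ⊆ _)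
      fun u v huv hv => ⟨hv.1.trans_le (hφ huv), abs_le.1 (huv.trans (abs_le.2 hv.2))⟩
    refine (h_uniform r hr).congr fun x _ => ?_
    dsimp only
    rw [intervalIntegral.integral_of_le (neg_le_self hr.1), ← integral_Icc_eq_integral_Ioc,
      Measure.restrict_restrict (measurableSet_lt measurable_const hφ.measurable),
      setIntegral_congr_set h_ae]

lemma measurable_ite_abs_le (b : ℝ) : Measurable fun z : ℝ => if |z| ≤ b then z else 0 :=
  measurable_id.ite (measurableSet_le measurable_abs measurable_const) measurable_const

lemma integral_comp_ite_abs_le {μ : Measure ℝ} [IsFiniteMeasure μ] {F : ℝ → ℝ} {b : ℝ}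
    (hF : IntegrableOn F (Icc (-b) b) μ) :
    ∫ z, F (if |z| ≤ b then z else 0) ∂μ
      = ∫ z in Icc (-b) b, F z ∂μ + μ.real (Icc (-b) b)ᶜ * F 0 := by
  have h_in : EqOn (fun z => F (if |z| ≤ b then z else 0)) F (Icc (-b) b) :=
    fun z hz => by simp only [if_pos (abs_le.2 hz)]
  have h_out : EqOn (fun z => F (if |z| ≤ b then z else 0)) (fun _ => F 0) (Icc (-b) b)ᶜ :=
    fun z hz => by simp only [if_neg (mt abs_le.1 hz)]
  have h_int : Integrable (fun z => F (if |z| ≤ b then z else 0)) μ := by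
    rw [← integrableOn_univ, ← union_compl_self (Icc (-b) b)]
    exact (hF.congr_fun h_in.symm measurableSet_Icc).union
      ((integrable_const (F 0)).integrableOn.congr_fun h_out.symm measurableSet_Icc.compl)
  rw [← integral_add_compl measurableSet_Icc h_int, setIntegral_congr_fun measurableSet_Icc h_in,
    setIntegral_congr_fun measurableSet_Icc.compl h_out, setIntegral_const, smul_eq_mul]

lemma isSymmUnimodal_gaussianPDFReal (v : NNReal) : IsSymmUnimodal (gaussianPDFReal 0 v) :=
  fun u w h => by
    simp only [gaussianPDFReal_def, sub_zero]
    gcongr ?_ * Real.exp (-?_ / _)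
    exact sq_le_sq.2 h

section AffineStep

variable {σ : ℝ → ℝ} {L a : ℝ}

lemma convexOn_integral_abs_add_mul {r α₀ α₁ : ℝ} (hr : 0 ≤ r) (hσ0 : ∀ x, 0 ≤ σ x)
    (hσLip : ∀ x y, |σ x - σ y| ≤ L * |x - y|) (ha : 0 ≤ a)
    (hσsc : ConvexOn ℝ univ fun x => σ x ^ 2 + a * x ^ 2)
    (hLa : r ^ 2 * (L ^ 2 + a) ≤ ((2 - √2) * α₁) ^ 2) :
    ConvexOn ℝ univ fun x => ∫ w in -r..r, |α₀ + α₁ * x + σ x * w| := by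
  simp only [integral_abs_add_mul hr (hσ0 _)]
  have h_mean : ConvexOn ℝ univ fun x => uniformMeanAbs (α₀ + α₁ * x) (r * σ x) := by
    refine convexOn_uniformMeanAbs (L := r * L) (a := r ^ 2 * a) (fun x => mul_nonneg hr (hσ0 x))
      (fun x y => ?_) (by positivity) ?_ (by linarith)
    · rw [← mul_sub, abs_mul, abs_of_nonneg hr, mul_assoc]
      gcongr
      exact hσLip x y
    · refine (hσsc.smul (sq_nonneg r)).congr fun x _ => ?_
      simp only [smul_eq_mul]
      ring
  exact h_mean.smul (by positivity : 0 ≤ 2 * r)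

variable {μ : Measure ℝ} [IsFiniteMeasure μ] {φ : ℝ → ℝ} {b α₀ α₁ : ℝ}

lemma convexOn_integral_abs_add_mul_truncated (hφ : IsSymmUnimodal φ) (hφ0 : ∀ w, 0 ≤ φ w)
    (hμ : μ = volume.withDensity fun w => ENNReal.ofReal (φ w)) (hb : 0 ≤ b)
    (hσ0 : ∀ x, 0 ≤ σ x) (hσLip : ∀ x y, |σ x - σ y| ≤ L * |x - y|) (ha : 0 ≤ a)
    (hσsc : ConvexOn ℝ univ fun x => σ x ^ 2 + a * x ^ 2)
    (hLa : b ^ 2 * (L ^ 2 + a) ≤ ((2 - √2) * α₁) ^ 2) :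
    ConvexOn ℝ univ fun x => ∫ z, |α₀ + α₁ * x + σ x * if |z| ≤ b then z else 0| ∂μ := by
  have h_int (ν : Measure ℝ) [IsFiniteMeasureOnCompacts ν] (x : ℝ) :
      IntegrableOn (fun z => |α₀ + α₁ * x + σ x * z|) (Icc (-b) b) ν :=
    Continuous.integrableOn_Icc (by fun_prop)
  have h_body : ConvexOn ℝ univ fun x => ∫ w in Icc (-b) b, |α₀ + α₁ * x + σ x * w| * φ w := by
    refine hφ.convexOn_setIntegral_mul hφ0 hb (fun x _ => h_int _ x) fun r ⟨hr0, hrb⟩ =>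
      convexOn_integral_abs_add_mul hr0 hσ0 hσLip ha hσsc (hLa.trans' ?_)
    gcongr
  have h_tail : ConvexOn ℝ univ fun x => μ.real (Icc (-b) b)ᶜ * |α₀ + α₁ * x| :=
    (convexOn_comp_add_mul (f := fun y => |y|) convexOn_univ_norm _ _).smul measureReal_nonneg
  refine (h_body.add h_tail).congr fun x _ => ?_
  have h_density : ∫ z in Icc (-b) b, |α₀ + α₁ * x + σ x * z| ∂μ
      = ∫ w in Icc (-b) b, |α₀ + α₁ * x + σ x * w| * φ w := by
    rw [hμ, setIntegral_withDensity_eq_setIntegral_toReal_smul hφ.measurable.ennreal_ofReal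
      (ae_of_all _ fun _ => ENNReal.ofReal_lt_top) _ measurableSet_Icc]
    simp only [ENNReal.toReal_ofReal (hφ0 _), smul_eq_mul, mul_comm]
  have h_split := integral_comp_ite_abs_le (h_int μ x)
  rw [h_density, mul_zero, add_zero] at h_split
  exact h_split.symm

lemma convexOn_integral_comp_add_mul_truncated (hφ : IsSymmUnimodal φ) (hφ0 : ∀ w, 0 ≤ φ w)
    (hμ : μ = volume.withDensity fun w => ENNReal.ofReal (φ w)) (hb : 0 ≤ b)
    (hσ0 : ∀ x, 0 ≤ σ x) (hσLip : ∀ x y, |σ x - σ y| ≤ L * |x - y|) (ha : 0 ≤ a)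
    (hσsc : ConvexOn ℝ univ fun x => σ x ^ 2 + a * x ^ 2)
    (hLa : b ^ 2 * (L ^ 2 + a) ≤ ((2 - √2) * α₁) ^ 2) {f : ℝ → ℝ} (hf : ConvexOn ℝ univ f) :
    ConvexOn ℝ univ fun x => ∫ z, f (α₀ + α₁ * x + σ x * if |z| ≤ b then z else 0) ∂μ := by
  have h_trunc := measurable_ite_abs_le b
  refine convexOn_integral_comp_of_convexOn_integral_abs_sub (fun x _ => by fun_prop)
    (fun x _ => ⟨|α₀ + α₁ * x| + |σ x| * b, ae_of_all _ fun z => ?_⟩) (fun k => ?_) hf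
  · refine (abs_add_le _ _).trans ?_
    rw [abs_mul]
    gcongr
    split_ifs with hz
    exacts [hz, by simpa]
  · have h_shift (x z : ℝ) : α₀ + α₁ * x + σ x * z - k = α₀ - k + α₁ * x + σ x * z := by ring
    simp only [h_shift]
    exact convexOn_integral_abs_add_mul_truncated hφ hφ0 hμ hb hσ0 hσLip ha hσsc hLa

end AffineStep

lemma half_lt_one_add_mul_of_monotone {b₀ b₁ c h : ℝ} (hh : 0 ≤ h) (hch : 2 * c * h < 1)
    (hmono : Monotone fun x => b₀ + b₁ * x + c * x) : 1 / 2 < 1 + h * b₁ := by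
  have hslope : -c ≤ b₁ := by linarith [hmono zero_le_one]
  linarith [mul_le_mul_of_nonneg_left hslope hh]

lemma sq_div_sqrt_mul_le {lam D α : ℝ} (hD : 0 < D) (hlam : lam ∈ Ioo 0 (1 / (2 + √2)))
    (hα : 1 / 2 ≤ α) : (lam / √D) ^ 2 * D ≤ ((2 - √2) * α) ^ 2 := by
  have hsqrt2 : 0 ≤ 2 - √2 := by
    rw [sub_nonneg, Real.sqrt_le_left zero_le_two]; norm_num
  have h_eq : 1 / (2 + √2) = (2 - √2) * (1 / 2) := by
    rw [div_eq_iff (by positivity)]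
    linear_combination 1 / 2 * Real.sq_sqrt (zero_le_two (α := ℝ))
  rw [div_pow, Real.sq_sqrt hD.le, div_mul_cancel₀ _ hD.ne']
  refine pow_le_pow_left₀ hlam.1.le ?_ 2
  calc lam ≤ (2 - √2) * (1 / 2) := h_eq ▸ hlam.2.le
    _ ≤ (2 - √2) * α := by gcongr

theorem truncatedEuler_convexOrder_convex_general {Ω : Type*} [MeasurableSpace Ω] {P : Measure Ω}
    [IsFiniteMeasure P] {Z : Ω → ℝ} (hZ_meas : AEMeasurable Z P) {φ : ℝ → ℝ}
    (hφ : IsSymmUnimodal φ) (hφ0 : ∀ w, 0 ≤ φ w)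
    (hZ : P.map Z = volume.withDensity fun w => ENNReal.ofReal (φ w))
    {σ : ℝ → ℝ} {L a : ℝ} (hσ0 : ∀ x, 0 ≤ σ x) (hσLip : ∀ x y, |σ x - σ y| ≤ L * |x - y|)
    (ha : 0 ≤ a) (hσsc : ConvexOn ℝ univ fun x => σ x ^ 2 + a * x ^ 2) {b₀ b₁ h b : ℝ} (hh : 0 ≤ h)
    (hb : 0 ≤ b) (hbh : b ^ 2 * (h * (L ^ 2 + a)) ≤ ((2 - √2) * (1 + h * b₁)) ^ 2)
    {f : ℝ → ℝ} (hf : ConvexOn ℝ univ f) :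
    ConvexOn ℝ univ fun x =>
      ∫ ω, f (x + h * (b₀ + b₁ * x) + √h * σ x * if |Z ω| ≤ b then Z ω else 0) ∂P := by
  have h_law : ConvexOn ℝ univ fun x => ∫ z, f (h * b₀ + (1 + h * b₁) * x
      + √h * σ x * if |z| ≤ b then z else 0) ∂P.map Z := by
    refine convexOn_integral_comp_add_mul_truncated (L := √h * L) (a := h * a) hφ hφ0 hZ hb
      (fun x => mul_nonneg (Real.sqrt_nonneg h) (hσ0 x)) (fun x y => ?_) (by positivity) ?_ ?_ hf
    · rw [← mul_sub, abs_mul, abs_of_nonneg (Real.sqrt_nonneg h), mul_assoc]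
      gcongr
      exact hσLip x y
    · refine (hσsc.smul hh).congr fun x _ => ?_
      simp only [smul_eq_mul, mul_pow, Real.sq_sqrt hh]
      ring
    · rwa [mul_pow, Real.sq_sqrt hh, ← mul_add]
  have hf_cont : Continuous f := continuousOn_univ.1 (hf.continuousOn isOpen_univ)
  have h_trunc := measurable_ite_abs_le b
  have h_meas (x : ℝ) : Measurable fun z : ℝ =>
      f (h * b₀ + (1 + h * b₁) * x + √h * σ x * if |z| ≤ b then z else 0) :=
    hf_cont.measurable.comp (by fun_prop)
  refine h_law.congr fun x _ => ?_
  dsimp only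
  rw [integral_map hZ_meas (h_meas x).aestronglyMeasurable]
  congr! 3
  ring

/-- **The truncated Euler step with affine drift propagates convexity (convex order).**
Under the standing assumptions (`σ ≥ 0` Lipschitz and semi-convex, `β` convex with
`β + c·id` nondecreasing, `2ch < 1`, `λ ∈ (0, 1/(2+√2))`, threshold
`s_h = λ/√(h(L² + a))`), if moreover `β` is affine, then for every convex `f : ℝ → ℝ`
the map `x ↦ E f(E^h(x, Z̃^h))` is convex. -/
theorem truncatedEuler_convexOrder_convex {Ω : Type*} [MeasurableSpace Ω]
    (P : Measure Ω) [IsProbabilityMeasure P]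
    (Z : Ω → ℝ) (hZmeas : Measurable Z) (hZ : Measure.map Z P = gaussianReal 0 1)
    (σ β : ℝ → ℝ) (L : ℝ) (hL : 0 < L)
    (hσ0 : ∀ x, 0 ≤ σ x) (hσLip : ∀ x y, |σ x - σ y| ≤ L * |x - y|)
    (a : ℝ) (ha : 0 ≤ a) (hsc : ConvexOn ℝ Set.univ fun x => σ x ^ 2 + a * x ^ 2)
    (hβ : ConvexOn ℝ Set.univ β)
    (c : ℝ) (hc : 0 ≤ c) (hmono : Monotone fun x => β x + c * x)
    (b₀ b₁ : ℝ) (hβaff : ∀ x, β x = b₀ + b₁ * x)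
    (h : ℝ) (hh : 0 < h) (hch : 2 * c * h < 1)
    (lam : ℝ) (hlam : lam ∈ Set.Ioo 0 (1 / (2 + Real.sqrt 2)))
    (f : ℝ → ℝ) (hfcvx : ConvexOn ℝ Set.univ f) :
    ConvexOn ℝ Set.univ fun x =>
      ∫ ω, f (x + h * β x + Real.sqrt h * σ x *
        (if |Z ω| ≤ lam / Real.sqrt (h * (L ^ 2 + a)) then Z ω else 0)) ∂P := by
  obtain rfl : β = fun x => b₀ + b₁ * x := funext hβaff
  exact truncatedEuler_convexOrder_convex_general hZmeas.aemeasurable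
    (isSymmUnimodal_gaussianPDFReal 1) (gaussianPDFReal_nonneg 0 1)
    (hZ.trans (gaussianReal_of_var_ne_zero 0 one_ne_zero)) hσ0 hσLip ha hsc hh.le
    (div_nonneg hlam.1.le (Real.sqrt_nonneg _))
    (sq_div_sqrt_mul_le (by positivity) hlam (half_lt_one_add_mul_of_monotone hh.le hch hmono).le)
    hfcvx
end
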